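/- arXiv:1307.5361 — 2 statements merged into one kernel-verified Lean document; each statement's English description precedes it below -/
import Mathlib

section
/- Let (p_n)_{n ∈ ℕ} be a sequence of polynomials with p_n ∈ ℤ[x], deg p_n ≤ n, and ∫_0^1 p_n(x) dx ≠ 0 for every n. Then liminf_{n→∞} ψ(n+1)/n ≥ −log ( limsup_{n→∞} (max_{x ∈ [0,1]} |p_n(x)|)^{1/n} ). -/
open MeasureTheory Filter Set

/-- Chebyshev's function `ψ(x) = ∑_{p^m ≤ x} log p`, written as a sum of the
von Mangoldt function over integers up to `x`. -/
noncomputable def chebyshevPsi (x : ℝ) : ℝ :=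
  ∑ n ∈ Finset.Icc 1 ⌊x⌋₊, ArithmeticFunction.vonMangoldt n

/-!
Integrating an integer polynomial of degree at most `n` over `[0, 1]` produces denominators
`1, …, n + 1` only, so `lcm(1, …, n + 1) = exp ψ(n + 1)` times the integral is an integer. A nonzero
integral therefore has absolute value at least `exp (-ψ(n + 1))`, and the maximum of the polynomial
on `[0, 1]` is at least as large. The theorem follows by taking `n`-th roots and passing to the
limit; the boundedness of `ψ(n + 1) / n` is Chebyshev's upper bound.
-/

section PolynomialIntegral

open Polynomial

theorem integral_aeval_eq_sum {R : Type*} [CommSemiring R] [Algebra R ℝ] {q : R[X]} {n : ℕ}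
    (hq : q.natDegree < n) (a b : ℝ) :
    ∫ x in a..b, aeval x q =
      ∑ i ∈ Finset.range n,
        algebraMap R ℝ (q.coeff i) * ((b ^ (i + 1) - a ^ (i + 1)) / (i + 1)) := by
  simp_rw [aeval_eq_sum_range' hq, Algebra.smul_def]
  rw [intervalIntegral.integral_finsetSum fun i _ ↦
    Continuous.intervalIntegrable (by fun_prop) a b]
  simp_rw [intervalIntegral.integral_const_mul, integral_pow]

theorem dvd_lcmUpto {k n : ℕ} (hk : 0 < k) (hkn : k ≤ n) : k ∣ n.lcmUpto :=
  Finset.dvd_lcm (f := id) (Finset.mem_Icc.2 ⟨hk, hkn⟩)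

theorem lcmUpto_div_mem_range_intCast {k n : ℕ} (hk : 0 < k) (hkn : k ≤ n) :
    (n.lcmUpto / k : ℝ) ∈ (Int.castRingHom ℝ).range := by
  rw [← Nat.cast_div (dvd_lcmUpto hk hkn) (by positivity)]
  exact natCast_mem _ _

variable {q : ℤ[X]} {n : ℕ}

theorem lcmUpto_mul_integral_mem_range_intCast (hq : q.natDegree < n) :
    n.lcmUpto * ∫ x in (0 : ℝ)..1, aeval x q ∈ (Int.castRingHom ℝ).range := by
  have integral_eq : n.lcmUpto * ∫ x in (0 : ℝ)..1, aeval x q =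
      ∑ i ∈ Finset.range n, (q.coeff i : ℝ) * (n.lcmUpto / (i + 1 : ℕ)) := by
    rw [integral_aeval_eq_sum hq, Finset.mul_sum]
    refine Finset.sum_congr rfl fun i _ ↦ ?_
    rw [algebraMap_int_eq, eq_intCast, one_pow, zero_pow i.succ_ne_zero, Nat.cast_succ]
    ring
  rw [integral_eq]
  refine sum_mem fun i hi ↦ mul_mem (intCast_mem _ _) ?_
  exact lcmUpto_div_mem_range_intCast i.succ_pos (Finset.mem_range.1 hi)

theorem exp_neg_psi_le_abs_integral (hq : q.natDegree < n)
    (h0 : ∫ x in (0 : ℝ)..1, aeval x q ≠ 0) :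
    Real.exp (-Chebyshev.psi n) ≤ |∫ x in (0 : ℝ)..1, aeval x q| := by
  have lcm_pos : (0 : ℝ) < n.lcmUpto := mod_cast n.lcmUpto_pos
  obtain ⟨z, hz⟩ := lcmUpto_mul_integral_mem_range_intCast hq
  rw [eq_intCast] at hz
  have z_ne_zero : z ≠ 0 := by
    rintro rfl
    exact mul_ne_zero lcm_pos.ne' h0 (by simpa using hz.symm)
  rw [Chebyshev.psi_eq_log_lcmUpto, Real.exp_neg, Real.exp_log lcm_pos,
    inv_le_iff_one_le_mul₀' lcm_pos]
  calc (1 : ℝ) ≤ |(z : ℝ)| := mod_cast Int.one_le_abs z_ne_zero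
    _ = n.lcmUpto * |∫ x in (0 : ℝ)..1, aeval x q| := by rw [hz, abs_mul, abs_of_pos lcm_pos]

end PolynomialIntegral

theorem norm_integral_le_sSup_norm_mul {E : Type*} [NormedAddCommGroup E] [NormedSpace ℝ E]
    {f : ℝ → E} {a b : ℝ} (hab : a ≤ b) (hf : ContinuousOn f (Icc a b)) :
    ‖∫ x in a..b, f x‖ ≤ sSup ((fun x ↦ ‖f x‖) '' Icc a b) * (b - a) := by
  rw [← abs_of_nonneg (sub_nonneg.2 hab)]
  refine intervalIntegral.norm_integral_le_of_norm_le_const fun x hx ↦ ?_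
  rw [uIoc_of_le hab] at hx
  exact hf.norm.le_sSup_image_Icc (Ioc_subset_Icc_self hx)

theorem chebyshevPsi_eq_psi (x : ℝ) : chebyshevPsi x = Chebyshev.psi x := rfl

theorem exp_neg_chebyshevPsi_le_sSup_abs_aeval {q : Polynomial ℤ} {n : ℕ} (hq : q.natDegree ≤ n)
    (h0 : ∫ x in (0 : ℝ)..1, Polynomial.aeval x q ≠ 0) :
    Real.exp (-chebyshevPsi (n + 1)) ≤
      sSup ((fun x ↦ |Polynomial.aeval x q|) '' Icc (0 : ℝ) 1) := by
  calc Real.exp (-chebyshevPsi (n + 1))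
      ≤ |∫ x in (0 : ℝ)..1, Polynomial.aeval x q| := by
        rw [chebyshevPsi_eq_psi]
        exact_mod_cast exp_neg_psi_le_abs_integral (Nat.lt_succ_of_le hq) h0
    _ ≤ sSup ((fun x ↦ |Polynomial.aeval x q|) '' Icc (0 : ℝ) 1) := by
        simpa using norm_integral_le_sSup_norm_mul zero_le_one q.continuous_aeval.continuousOn

theorem chebyshevPsi_succ_div_nonneg (n : ℕ) : 0 ≤ chebyshevPsi (n + 1) / n :=
  div_nonneg (Chebyshev.psi_nonneg _) n.cast_nonneg

theorem isBoundedUnder_le_chebyshevPsi_succ_div :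
    IsBoundedUnder (· ≤ ·) atTop fun n : ℕ ↦ chebyshevPsi (n + 1) / n := by
  refine isBoundedUnder_of_eventually_le (a := (Real.log 4 + 4) * 2) ?_
  filter_upwards [eventually_ge_atTop 1] with n hn
  have one_le : (1 : ℝ) ≤ n := mod_cast hn
  rw [div_le_iff₀ (by positivity), chebyshevPsi_eq_psi]
  calc Chebyshev.psi (n + 1) ≤ (Real.log 4 + 4) * (n + 1) :=
        Chebyshev.psi_le_const_mul_self (by positivity)
    _ ≤ (Real.log 4 + 4) * (2 * n) := by gcongr; linarith
    _ = (Real.log 4 + 4) * 2 * n := by ring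

section LimsupLiminf

variable {ι : Type*} {f : Filter ι} {u a : ι → ℝ}

theorem limsup_eq_zero_of_not_isBoundedUnder (ha : ¬IsBoundedUnder (· ≤ ·) f a) :
    limsup a f = 0 := by
  have no_bound : {c : ℝ | ∀ᶠ i in f, a i ≤ c} = ∅ :=
    eq_empty_of_forall_notMem fun _ hc ↦ ha (isBoundedUnder_of_eventually_le hc)
  rw [limsup_eq, no_bound, Real.sInf_empty]

theorem exp_neg_liminf_le_limsup [f.NeBot] (hu_ge : IsBoundedUnder (· ≥ ·) f u)
    (hu_le : IsBoundedUnder (· ≤ ·) f u) (ha : IsBoundedUnder (· ≤ ·) f a)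
    (hua : ∀ᶠ i in f, Real.exp (-u i) ≤ a i) :
    Real.exp (-liminf u f) ≤ limsup a f := by
  have antitone_exp_neg : Antitone fun x : ℝ ↦ Real.exp (-x) :=
    fun _ _ h ↦ Real.exp_le_exp.2 (neg_le_neg h)
  calc Real.exp (-liminf u f) = limsup (fun i ↦ Real.exp (-u i)) f :=
        antitone_exp_neg.map_liminf_of_continuousAt u (by fun_prop)
          hu_le.isCoboundedUnder_ge hu_ge
    _ ≤ limsup a f := limsup_le_limsup hua
        (isBoundedUnder_of ⟨0, fun _ ↦ (Real.exp_pos _).le⟩).isCoboundedUnder_le ha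

theorem neg_log_limsup_le_liminf [f.NeBot] (hu_nonneg : ∀ᶠ i in f, 0 ≤ u i)
    (hu_le : IsBoundedUnder (· ≤ ·) f u) (hua : ∀ᶠ i in f, Real.exp (-u i) ≤ a i) :
    -Real.log (limsup a f) ≤ liminf u f := by
  by_cases ha : IsBoundedUnder (· ≤ ·) f a
  · have exp_le := exp_neg_liminf_le_limsup
      (isBoundedUnder_of_eventually_ge hu_nonneg) hu_le ha hua
    exact neg_le.1 ((Real.le_log_iff_exp_le ((Real.exp_pos _).trans_le exp_le)).2 exp_le)
  · -- Here the real-valued `limsup` and the logarithm take the junk values `0` and `log 0 = 0`.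
    rw [limsup_eq_zero_of_not_isBoundedUnder ha, Real.log_zero, neg_zero]
    exact le_liminf_of_le hu_le.isCoboundedUnder_ge hu_nonneg

end LimsupLiminf

theorem stmt14 (p : ℕ → Polynomial ℤ) (hdeg : ∀ n, (p n).natDegree ≤ n)
    (hI0 : ∀ n, (∫ x in (0:ℝ)..1, Polynomial.aeval x (p n)) ≠ 0) :
    -Real.log (Filter.atTop.limsup (fun n : ℕ =>
        (sSup ((fun x => |Polynomial.aeval x (p n)|) '' Set.Icc (0:ℝ) 1)) ^ ((1:ℝ)/n))) ≤
      Filter.atTop.liminf (fun n : ℕ => chebyshevPsi (n+1) / n) := by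
  refine neg_log_limsup_le_liminf (.of_forall chebyshevPsi_succ_div_nonneg)
    isBoundedUnder_le_chebyshevPsi_succ_div (.of_forall fun n ↦ ?_)
  calc Real.exp (-(chebyshevPsi (n + 1) / n))
      = Real.exp (-chebyshevPsi (n + 1)) ^ ((1 : ℝ) / n) := by
        rw [← Real.exp_mul, mul_one_div, neg_div]
    _ ≤ sSup ((fun x ↦ |Polynomial.aeval x (p n)|) '' Icc (0 : ℝ) 1) ^ ((1 : ℝ) / n) := by
        gcongr
        exact exp_neg_chebyshevPsi_le_sSup_abs_aeval (hdeg n) (hI0 n)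
end

section
/- Let Q_1,…,Q_k ∈ ℤ[x] be nonzero polynomials with deg Q_i = m_i, let α_1,…,α_k > 0, let n ≥ 2, and set N := 2 ∑_{i=1}^k m_i ⌈α_i(n−1)⌉ and Δ̃(x_1,…,x_n) := ∏_{j=1}^n ∏_{i=1}^k (Q_i(x_j))^{2⌈α_i(n−1)⌉} · ∏_{1 ≤ i < j ≤ n} (x_i−x_j)². Then ∏_{l=n+N}^{2n−1+N} lcm(1,…,l) · ∫_{[0,1]^n} Δ̃(x_1,…,x_n) dx_1 … dx_n ≥ 1, and consequently ∑_{l=n+N}^{2n−1+N} ψ(l) ≥ −log max_{(x_1,…,x_n) ∈ [0,1]^n} Δ̃(x_1,…,x_n). -/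
open MeasureTheory Filter Set

/-!
Put `P = ∏ i, Q i ^ (2 * ⌈α i * (n - 1)⌉)`, so that `Δ x = ∏ j, P (x j) * (det (x i ^ j)) ^ 2`.
Andréief's identity turns the integral of `Δ` over the unit cube into `n!` times the determinant of
the Hankel matrix of moments `∫ t in 0..1, P t * t ^ (i + j)`. Row `i` of that matrix becomes
integral after multiplication by `lcm(1, …, n + N + i)`, since `P * X ^ (i + j)` has degree less
than `n + N + i`. Hence the integral times the product of these lcms is an integer multiple of
`n!`; it is positive because `Δ ≥ 0` is not identically zero. The bound on `ψ` follows by bounding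
the integral by the maximum of `Δ` and taking logarithms.
-/

open scoped Polynomial Nat

section Determinants

theorem exists_int_prod_mul_det_eq {ι R : Type*} [Fintype ι] [DecidableEq ι] [CommRing R]
    {v : ι → R} {A : Matrix ι ι R} (h : ∀ i j, ∃ z : ℤ, v i * A i j = z) :
    ∃ z : ℤ, (∏ i, v i) * A.det = z := by
  choose Z hZ using h
  have hscaled : (Matrix.of fun i j ↦ v i * A i j) = (Matrix.of Z).map (Int.castRingHom R) := by
    ext i j
    exact hZ i j
  exact ⟨(Matrix.of Z).det, by
    rw [← Matrix.det_mul_column, hscaled, ← RingHom.mapMatrix_apply, ← RingHom.map_det,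
      eq_intCast]⟩

theorem sum_perm_sum_perm_sign_mul_prod {ι R : Type*} [Fintype ι] [DecidableEq ι] [CommRing R]
    (M : Matrix ι ι R) :
    ∑ τ : Equiv.Perm ι, ∑ σ : Equiv.Perm ι,
      (Equiv.Perm.sign τ : R) * (Equiv.Perm.sign σ : R) * ∏ j, M (σ j) (τ j) =
      (Fintype.card ι)! * M.det := by
  have hinner (τ : Equiv.Perm ι) :
      ∑ σ : Equiv.Perm ι, (Equiv.Perm.sign τ : R) * (Equiv.Perm.sign σ : R) * ∏ j, M (σ j) (τ j) =
        M.det := calc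
    _ = (Equiv.Perm.sign τ : R) * (M.submatrix id τ).det := by
      simp only [Matrix.det_apply', Finset.mul_sum, mul_assoc, Matrix.submatrix_apply, id_eq]
    _ = M.det := by
      rw [Matrix.det_permute', ← mul_assoc, ← Int.cast_mul, ← Units.val_mul, Int.units_mul_self]
      simp
  simp only [hinner, Finset.sum_const, Finset.card_univ, Fintype.card_perm, nsmul_eq_mul]

/-- **Andréief's identity**. -/
theorem integral_det_mul_det {ι α 𝕜 : Type*} [Fintype ι] [DecidableEq ι] [RCLike 𝕜]
    [MeasurableSpace α] {μ : Measure α} [SigmaFinite μ] {f g : ι → α → 𝕜}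
    (hfg : ∀ i j, Integrable (fun t ↦ f i t * g j t) μ) :
    ∫ x : ι → α, (Matrix.of fun i j ↦ f i (x j)).det * (Matrix.of fun i j ↦ g i (x j)).det
        ∂Measure.pi (fun _ ↦ μ) =
      (Fintype.card ι)! * (Matrix.of fun i j ↦ ∫ t, f i t * g j t ∂μ).det := by
  have hexpand (x : ι → α) :
      (Matrix.of fun i j ↦ f i (x j)).det * (Matrix.of fun i j ↦ g i (x j)).det =
        ∑ τ : Equiv.Perm ι, ∑ σ : Equiv.Perm ι,
          (Equiv.Perm.sign τ : 𝕜) * (Equiv.Perm.sign σ : 𝕜) *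
            ∏ j, f (σ j) (x j) * g (τ j) (x j) := by
    rw [Matrix.det_apply', Matrix.det_apply', Finset.sum_mul_sum, Finset.sum_comm]
    refine Finset.sum_congr rfl fun τ _ ↦ Finset.sum_congr rfl fun σ _ ↦ ?_
    simp only [Matrix.of_apply, Finset.prod_mul_distrib]
    ring
  have hint (σ τ : Equiv.Perm ι) :
      Integrable (fun x : ι → α ↦ (Equiv.Perm.sign τ : 𝕜) * (Equiv.Perm.sign σ : 𝕜) *
        ∏ j, f (σ j) (x j) * g (τ j) (x j)) (Measure.pi fun _ ↦ μ) :=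
    (Integrable.fintype_prod fun j ↦ hfg (σ j) (τ j)).const_mul _
  simp_rw [hexpand]
  rw [integral_finsetSum _ fun τ _ ↦ integrable_finsetSum _ fun σ _ ↦ hint σ τ,
    ← sum_perm_sum_perm_sign_mul_prod]
  refine Finset.sum_congr rfl fun τ _ ↦ ?_
  rw [integral_finsetSum _ fun σ _ ↦ hint σ τ]
  refine Finset.sum_congr rfl fun σ _ ↦ ?_
  rw [integral_const_mul, integral_fintype_prod_eq_prod fun j t ↦ f (σ j) t * g (τ j) t]
  rfl

end Determinants

section SetIntegral

variable {X : Type*} [MeasurableSpace X] {μ : Measure X} {s : Set X} {f : X → ℝ}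

theorem setIntegral_pos_of_mem_interior [TopologicalSpace X] [μ.IsOpenPosMeasure]
    (hs : MeasurableSet s) (hf : ContinuousOn f s) (hfi : IntegrableOn f s μ)
    (hf0 : ∀ x ∈ s, 0 ≤ f x) {y : X} (hy : y ∈ interior s) (hfy : f y ≠ 0) :
    0 < ∫ x in s, f x ∂μ := by
  rw [setIntegral_pos_iff_support_of_nonneg_ae (ae_restrict_of_forall_mem hs hf0) hfi]
  have hs_nhds : s ∈ nhds y := mem_interior_iff_mem_nhds.1 hy
  have hsupport : Function.support f ∈ nhds y := (hf.continuousAt hs_nhds).eventually_ne hfy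
  exact Measure.measure_pos_of_mem_nhds μ (inter_mem hsupport hs_nhds)

theorem setIntegral_le_measureReal_mul_sSup_image (hs : MeasurableSet s) (hμs : μ s ≠ ⊤)
    (hfi : IntegrableOn f s μ) (hfs : BddAbove (f '' s)) :
    ∫ x in s, f x ∂μ ≤ μ.real s * sSup (f '' s) := calc
  _ ≤ ∫ _ in s, sSup (f '' s) ∂μ :=
    setIntegral_mono_on hfi (integrableOn_const hμs) hs
      fun x hx ↦ le_csSup hfs (mem_image_of_mem f hx)
  _ = μ.real s * sSup (f '' s) := by rw [setIntegral_const, smul_eq_mul]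

end SetIntegral

section UnitCube

/-- The cube `[0, 1]ⁿ`, as a product of intervals. -/
abbrev unitCube (n : ℕ) : Set (Fin n → ℝ) := Set.univ.pi fun _ : Fin n => Set.Icc (0 : ℝ) 1

theorem isCompact_unitCube (n : ℕ) : IsCompact (unitCube n) :=
  isCompact_univ_pi fun _ ↦ isCompact_Icc

theorem measurableSet_unitCube (n : ℕ) : MeasurableSet (unitCube n) :=
  (isCompact_unitCube n).measurableSet

theorem interior_unitCube (n : ℕ) :
    interior (unitCube n) = Set.univ.pi fun _ : Fin n ↦ Set.Ioo (0 : ℝ) 1 := by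
  simp only [interior_pi_set finite_univ, interior_Icc]

theorem volume_unitCube (n : ℕ) : volume (unitCube n) = 1 := by
  rw [unitCube, volume_pi_pi]
  simp

end UnitCube

section WeightedDiscriminant

variable {n : ℕ} {w : ℝ → ℝ}

/-- The discriminant `∏_{i < j} (x i - x j) ^ 2` of the points `x`, weighted by `∏ j, w (x j)`. The
function `Δ̃` of the theorem is the case where `w` is a product of even powers of polynomials. -/
noncomputable def weightedDiscriminant (w : ℝ → ℝ) (x : Fin n → ℝ) : ℝ :=
  (∏ j, w (x j)) *
    ∏ q ∈ Finset.univ.filter (fun q : Fin n × Fin n => q.1 < q.2), (x q.1 - x q.2) ^ 2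

theorem weightedDiscriminant_eq_prod_mul_det_sq (w : ℝ → ℝ) (x : Fin n → ℝ) :
    weightedDiscriminant w x = (∏ j, w (x j)) * (Matrix.vandermonde x).det ^ 2 := by
  rw [weightedDiscriminant, Matrix.det_vandermonde, Finset.prod_filter,
    ← Finset.univ_product_univ, Finset.prod_product, ← Finset.prod_pow]
  congr 1
  refine Finset.prod_congr rfl fun i _ ↦ ?_
  rw [← Finset.prod_filter, ← Finset.prod_pow]
  exact Finset.prod_congr (by ext j; simp) fun j _ ↦ sub_sq_comm _ _

theorem continuous_weightedDiscriminant (hw : Continuous w) :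
    Continuous (weightedDiscriminant w : (Fin n → ℝ) → ℝ) := by
  unfold weightedDiscriminant
  fun_prop

theorem weightedDiscriminant_nonneg {s : Set ℝ} (hw : ∀ t ∈ s, 0 ≤ w t) {x : Fin n → ℝ}
    (hx : ∀ j, x j ∈ s) : 0 ≤ weightedDiscriminant w x :=
  mul_nonneg (Finset.prod_nonneg fun j _ ↦ hw _ (hx j)) (Finset.prod_nonneg fun _ _ ↦ sq_nonneg _)

theorem exists_weightedDiscriminant_ne_zero {s : Set ℝ} (hw : {t ∈ s | w t ≠ 0}.Infinite) :
    ∃ x : Fin n → ℝ, (∀ j, x j ∈ s) ∧ weightedDiscriminant w x ≠ 0 := by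
  let e := hw.natEmbedding
  refine ⟨fun j ↦ e j, fun j ↦ (e j).2.1, ?_⟩
  have hinj : Function.Injective fun j : Fin n ↦ (e j : ℝ) :=
    Subtype.val_injective.comp (e.injective.comp Fin.val_injective)
  rw [weightedDiscriminant_eq_prod_mul_det_sq]
  exact mul_ne_zero (Finset.prod_ne_zero_iff.2 fun j _ ↦ (e j).2.2)
    (pow_ne_zero _ (Matrix.det_vandermonde_ne_zero_iff.2 hinj))

theorem setIntegral_unitCube_weightedDiscriminant_pos (hw : Continuous w)
    (hw0 : ∀ t ∈ Set.Icc (0 : ℝ) 1, 0 ≤ w t) (hw_inf : {t ∈ Set.Ioo (0 : ℝ) 1 | w t ≠ 0}.Infinite) :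
    0 < ∫ x in unitCube n, weightedDiscriminant w x := by
  have hcont := (continuous_weightedDiscriminant (n := n) hw).continuousOn (s := unitCube n)
  obtain ⟨y, hy_mem, hy⟩ := exists_weightedDiscriminant_ne_zero (n := n) hw_inf
  exact setIntegral_pos_of_mem_interior (measurableSet_unitCube n) hcont
    (hcont.integrableOn_compact (isCompact_unitCube n))
    (fun x hx ↦ weightedDiscriminant_nonneg hw0 fun j ↦ hx j (mem_univ j))
    (interior_unitCube n ▸ fun j _ ↦ hy_mem j) hy

theorem integral_weightedDiscriminant {μ : Measure ℝ} [SigmaFinite μ]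
    (hw : ∀ k : ℕ, Integrable (fun t ↦ w t * t ^ k) μ) :
    ∫ x : Fin n → ℝ, weightedDiscriminant w x ∂Measure.pi (fun _ ↦ μ) =
      n ! * (Matrix.of fun i j : Fin n ↦ ∫ t, w t * t ^ (i + j : ℕ) ∂μ).det := by
  have hsplit (x : Fin n → ℝ) : weightedDiscriminant w x =
      (Matrix.of fun i j : Fin n ↦ w (x j) * x j ^ (i : ℕ)).det *
        (Matrix.of fun i j : Fin n ↦ x j ^ (i : ℕ)).det := by
    have hvdm : (Matrix.of fun i j : Fin n ↦ x j ^ (i : ℕ)) = (Matrix.vandermonde x).transpose :=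
      rfl
    rw [weightedDiscriminant_eq_prod_mul_det_sq, ← Matrix.det_transpose, ← hvdm, sq, ← mul_assoc,
      ← Matrix.det_mul_row]
    rfl
  have hmoment (i j : Fin n) :
      (fun t : ℝ ↦ w t * t ^ (i : ℕ) * t ^ (j : ℕ)) = fun t ↦ w t * t ^ (i + j : ℕ) := by
    ext t
    rw [pow_add, mul_assoc]
  simp_rw [hsplit]
  rw [integral_det_mul_det (f := fun (i : Fin n) t ↦ w t * t ^ (i : ℕ))
    (g := fun (j : Fin n) t ↦ t ^ (j : ℕ)) fun i j ↦ by simpa only [hmoment] using hw (i + j),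
    Fintype.card_fin]
  simp only [hmoment]

theorem setIntegral_unitCube_weightedDiscriminant (hw : Continuous w) :
    ∫ x in unitCube n, weightedDiscriminant w x =
      n ! * (Matrix.of fun i j : Fin n ↦
        ∫ t in Set.Icc (0 : ℝ) 1, w t * t ^ (i + j : ℕ)).det := by
  rw [unitCube, volume_pi, Measure.restrict_pi_pi]
  exact integral_weightedDiscriminant fun k ↦
    (by fun_prop : Continuous fun t ↦ w t * t ^ k).integrableOn_Icc

end WeightedDiscriminant

section IntegerPolynomials

theorem natDegree_prod_pow_two_mul {ι R : Type*} [Fintype ι] [CommSemiring R] [NoZeroDivisors R]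
    {Q : ι → R[X]} (hQ : ∀ i, Q i ≠ 0) (c : ι → ℕ) :
    (∏ i, Q i ^ (2 * c i)).natDegree = 2 * ∑ i, (Q i).natDegree * c i := by
  rw [Polynomial.natDegree_prod _ _ fun i _ ↦ pow_ne_zero _ (hQ i), Finset.mul_sum]
  refine Finset.sum_congr rfl fun i _ ↦ ?_
  rw [Polynomial.natDegree_pow]
  ring

theorem aeval_prod_pow_two_mul_nonneg {ι : Type*} [Fintype ι] (Q : ι → ℤ[X]) (c : ι → ℕ) (t : ℝ) :
    0 ≤ Polynomial.aeval t (∏ i, Q i ^ (2 * c i)) := by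
  simp only [map_prod, map_pow]
  exact Finset.prod_nonneg fun i _ ↦ (even_two_mul (c i)).pow_nonneg _

theorem integral_Icc_zero_one_aeval (P : ℤ[X]) :
    ∫ t in Set.Icc (0 : ℝ) 1, Polynomial.aeval t P =
      ∑ i ∈ Finset.range (P.natDegree + 1), P.coeff i * ((i : ℝ) + 1)⁻¹ := by
  rw [integral_Icc_eq_integral_Ioc, ← intervalIntegral.integral_of_le zero_le_one]
  simp_rw [Polynomial.aeval_eq_sum_range, zsmul_eq_mul]
  rw [intervalIntegral.integral_finsetSum fun i _ ↦
    (by fun_prop : Continuous fun t : ℝ ↦ (P.coeff i : ℝ) * t ^ i).intervalIntegrable _ _]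
  simp [integral_pow]

theorem exists_int_lcmUpto_mul_integral_aeval_eq {P : ℤ[X]} {L : ℕ} (hP : P.natDegree < L) :
    ∃ z : ℤ, (Nat.lcmUpto L : ℝ) * ∫ t in Set.Icc (0 : ℝ) 1, Polynomial.aeval t P = z := by
  have hdvd : ∀ i ∈ Finset.range (P.natDegree + 1), i + 1 ∣ Nat.lcmUpto L := fun i hi ↦
    Finset.dvd_lcm (f := id) (Finset.mem_Icc.2 (by grind))
  refine ⟨∑ i ∈ Finset.range (P.natDegree + 1), P.coeff i * (Nat.lcmUpto L / (i + 1) : ℕ), ?_⟩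
  rw [integral_Icc_zero_one_aeval, Finset.mul_sum, Int.cast_sum]
  refine Finset.sum_congr rfl fun i hi ↦ ?_
  rw [Int.cast_mul, Int.cast_natCast, Nat.cast_div (hdvd i hi) (by positivity)]
  push_cast
  ring

theorem infinite_setOf_mem_Ioo_aeval_ne_zero {P : ℤ[X]} (hP : P ≠ 0) {a b : ℝ} (hab : a < b) :
    {t ∈ Set.Ioo a b | Polynomial.aeval t P ≠ 0}.Infinite :=
  ((Set.Ioo_infinite hab).sdiff (P.rootSet_finite ℝ)).mono fun _ ht ↦
    ⟨ht.1, fun h ↦ ht.2 (Polynomial.mem_rootSet.2 ⟨hP, h⟩)⟩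

theorem exists_int_prod_lcmUpto_mul_det_moments_eq {P : ℤ[X]} {N : ℕ} (hP : P.natDegree ≤ N)
    (n : ℕ) :
    ∃ z : ℤ, ((∏ l ∈ Finset.Ico (n + N) (2 * n + N), Nat.lcmUpto l : ℕ) : ℝ) *
      (Matrix.of fun i j : Fin n ↦
        ∫ t in Set.Icc (0 : ℝ) 1, Polynomial.aeval t P * t ^ (i + j : ℕ)).det = z := by
  have hprod : ((∏ l ∈ Finset.Ico (n + N) (2 * n + N), Nat.lcmUpto l : ℕ) : ℝ) =
      ∏ i : Fin n, (Nat.lcmUpto (n + N + i) : ℝ) := by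
    rw [Fin.prod_univ_eq_prod_range (fun i ↦ (Nat.lcmUpto (n + N + i) : ℝ)) n,
      Finset.prod_Ico_eq_prod_range, show 2 * n + N - (n + N) = n by lia, Nat.cast_prod]
  rw [hprod]
  refine exists_int_prod_mul_det_eq fun i j ↦ ?_
  have hdeg : (P * Polynomial.X ^ (i + j : ℕ)).natDegree < n + N + i := by
    have := Polynomial.natDegree_mul_le (p := P) (q := Polynomial.X ^ (i + j : ℕ))
    rw [Polynomial.natDegree_X_pow] at this
    lia
  simpa using exists_int_lcmUpto_mul_integral_aeval_eq hdeg

theorem factorial_le_prod_lcmUpto_mul_setIntegral {P : ℤ[X]} (hP : P ≠ 0)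
    (hP0 : ∀ t ∈ Set.Icc (0 : ℝ) 1, 0 ≤ Polynomial.aeval t P) {N : ℕ} (hN : P.natDegree ≤ N)
    (n : ℕ) :
    (n ! : ℝ) ≤ ((∏ l ∈ Finset.Ico (n + N) (2 * n + N), Nat.lcmUpto l : ℕ) : ℝ) *
      ∫ x in unitCube n, weightedDiscriminant (fun t ↦ Polynomial.aeval t P) x := by
  have hlcm : 0 < ∏ l ∈ Finset.Ico (n + N) (2 * n + N), Nat.lcmUpto l :=
    Finset.prod_pos fun l _ ↦ Nat.lcmUpto_pos l
  have hpos := mul_pos (Nat.cast_pos (α := ℝ).2 hlcm)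
    (setIntegral_unitCube_weightedDiscriminant_pos (n := n) (Polynomial.continuous_aeval P) hP0
      (infinite_setOf_mem_Ioo_aeval_ne_zero hP zero_lt_one))
  obtain ⟨z, hz⟩ := exists_int_prod_lcmUpto_mul_det_moments_eq hN n
  rw [setIntegral_unitCube_weightedDiscriminant (Polynomial.continuous_aeval P), mul_left_comm,
    hz] at hpos ⊢
  have hz_pos : 0 < z := Int.cast_pos.1 (pos_of_mul_pos_right hpos (Nat.cast_nonneg _))
  exact le_mul_of_one_le_right (Nat.cast_nonneg _) (mod_cast hz_pos)

end IntegerPolynomials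

theorem chebyshevPsi_natCast (l : ℕ) : chebyshevPsi l = Real.log (Nat.lcmUpto l) := by
  rw [← Chebyshev.psi_eq_log_lcmUpto]
  rfl

theorem log_prod_lcmUpto (s : Finset ℕ) :
    Real.log (∏ l ∈ s, Nat.lcmUpto l : ℕ) = ∑ l ∈ s, chebyshevPsi l := by
  rw [Nat.cast_prod, Real.log_prod fun l _ ↦ Nat.cast_ne_zero.2 (Nat.lcmUpto_ne_zero l)]
  simp only [chebyshevPsi_natCast]

theorem stmt15_general {P : ℤ[X]} (hP : P ≠ 0)
    (hP0 : ∀ t ∈ Set.Icc (0 : ℝ) 1, 0 ≤ Polynomial.aeval t P) {N : ℕ} (hN : P.natDegree ≤ N)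
    (n : ℕ) :
    (n ! : ℝ) ≤ ((∏ l ∈ Finset.Ico (n + N) (2 * n + N), Nat.lcmUpto l : ℕ) : ℝ) *
        ∫ x in unitCube n, weightedDiscriminant (fun t ↦ Polynomial.aeval t P) x ∧
    Real.log n ! -
        Real.log (sSup (weightedDiscriminant (fun t ↦ Polynomial.aeval t P) '' unitCube n)) ≤
      ∑ l ∈ Finset.Ico (n + N) (2 * n + N), chebyshevPsi l := by
  set D := ∏ l ∈ Finset.Ico (n + N) (2 * n + N), Nat.lcmUpto l with hD
  set M := sSup (weightedDiscriminant (fun t ↦ Polynomial.aeval t P) '' unitCube n)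
  have hint := factorial_le_prod_lcmUpto_mul_setIntegral hP hP0 hN n
  refine ⟨hint, ?_⟩
  have hcont := (continuous_weightedDiscriminant (n := n)
    (Polynomial.continuous_aeval (A := ℝ) P)).continuousOn (s := unitCube n)
  have hle : ∫ x in unitCube n, weightedDiscriminant (fun t ↦ Polynomial.aeval t P) x ≤ M := by
    have hle_vol := setIntegral_le_measureReal_mul_sSup_image (μ := volume)
      (measurableSet_unitCube n) (isCompact_unitCube n).measure_ne_top
      (hcont.integrableOn_compact (isCompact_unitCube n))
      ((isCompact_unitCube n).bddAbove_image hcont)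
    rwa [measureReal_def, volume_unitCube, ENNReal.toReal_one, one_mul] at hle_vol
  have hfact : (0 : ℝ) < n ! := mod_cast n.factorial_pos
  have hDM : (n ! : ℝ) ≤ D * M := hint.trans (mul_le_mul_of_nonneg_left hle D.cast_nonneg)
  have hDM_ne : (D : ℝ) * M ≠ 0 := (hfact.trans_le hDM).ne'
  rw [sub_le_iff_le_add, ← log_prod_lcmUpto, ← hD,
    ← Real.log_mul (left_ne_zero_of_mul hDM_ne) (right_ne_zero_of_mul hDM_ne)]
  exact Real.log_le_log hfact hDM

theorem stmt15 (k : ℕ) (hk : 0 < k) (Q : Fin k → Polynomial ℤ) (m : Fin k → ℕ)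
    (hQ : ∀ i, Q i ≠ 0) (hdeg : ∀ i, (Q i).natDegree = m i)
    (α : Fin k → ℝ) (hα : ∀ i, 0 < α i) (n : ℕ) (hn : 2 ≤ n)
    (N : ℕ) (hN : N = 2 * ∑ i, m i * (⌈α i * ((n:ℝ) - 1)⌉).toNat)
    (Δ : (Fin n → ℝ) → ℝ)
    (hΔ : ∀ x, Δ x =
      (∏ j, ∏ i, (Polynomial.aeval (x j) (Q i)) ^ (2 * (⌈α i * ((n:ℝ) - 1)⌉).toNat)) *
        ∏ q ∈ Finset.univ.filter (fun q : Fin n × Fin n => q.1 < q.2), (x q.1 - x q.2) ^ 2) :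
    1 ≤ ((∏ l ∈ Finset.Icc (n + N) (2*n - 1 + N), (Finset.Icc 1 l).lcm id : ℕ) : ℝ) *
        ∫ x in (Set.univ.pi fun _ : Fin n => Set.Icc (0:ℝ) 1), Δ x ∧
    -Real.log (sSup (Δ '' (Set.univ.pi fun _ : Fin n => Set.Icc (0:ℝ) 1))) ≤
      ∑ l ∈ Finset.Icc (n + N) (2*n - 1 + N), chebyshevPsi l := by
  let P : ℤ[X] := ∏ i, Q i ^ (2 * ⌈α i * ((n : ℝ) - 1)⌉.toNat)
  have hP : P ≠ 0 := Finset.prod_ne_zero_iff.2 fun i _ ↦ pow_ne_zero _ (hQ i)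
  have hPN : P.natDegree ≤ N := by simp only [P, natDegree_prod_pow_two_mul hQ, hdeg, hN, le_refl]
  obtain rfl : Δ = weightedDiscriminant fun t ↦ Polynomial.aeval t P := by
    ext x
    simp only [hΔ, weightedDiscriminant, P, map_prod, map_pow]
  have hIcc : Finset.Icc (n + N) (2 * n - 1 + N) = Finset.Ico (n + N) (2 * n + N) := by grind
  have hfact : (1 : ℝ) ≤ n ! := mod_cast n.factorial_pos
  obtain ⟨hint, hpsi⟩ := stmt15_general hP (fun t _ ↦ aeval_prod_pow_two_mul_nonneg Q _ t) hPN n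
  rw [hIcc]
  exact ⟨hfact.trans hint, by linarith [Real.log_nonneg hfact]⟩
end
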